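/- Let (X, ρ) be a compact metric space, let μ and ν be Borel probability measures on X, and let δ > 0. Suppose that for every L ≥ 0 and every L-Lipschitz function φ : X → ℝ one has |∫_X φ dμ − ∫_X φ dν| ≤ δ·L. Then for every γ ∈ (0,1], every H ≥ 0 and every function φ : X → ℝ that is γ-Hölder with constant H (i.e. |φ(x) − φ(y)| ≤ H·ρ(x,y)^γ for all x,y ∈ X), one has |∫_X φ dμ − ∫_X φ dν| ≤ 3·H·δ^γ. -/

import Mathlib

lemma aux_cont {X : Type*} [MetricSpace X] (γ : ℝ) (hγ : 0 < γ) (H : ℝ) (φ : X → ℝ)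
    (h : ∀ x y : X, |φ x - φ y| ≤ H * dist x y ^ γ) : Continuous φ := by
  rw [continuous_iff_continuousAt]
  intro x
  unfold ContinuousAt
  rw [tendsto_iff_dist_tendsto_zero]
  refine squeeze_zero (fun _ => dist_nonneg) (fun y => h y x) ?_
  have hc : Continuous (fun y : X => H * dist y x ^ γ) :=
    continuous_const.mul ((continuous_id.dist continuous_const).rpow_const
      (fun _ => Or.inr hγ.le))
  have := hc.tendsto x
  simpa [Real.zero_rpow hγ.ne'] using this

lemma aux_ineq (δ : ℝ) (hδ : 0 < δ) (γ : ℝ) (hγ : 0 < γ) (hγ1 : γ ≤ 1) (t : ℝ) (ht : 0 ≤ t) :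
    t ^ γ ≤ δ ^ (γ - 1) * t + δ ^ γ := by
  rcases le_total t δ with h | h
  · have h1 := Real.rpow_le_rpow ht h hγ.le
    have h2 : 0 ≤ δ ^ (γ - 1) * t := by positivity
    linarith
  · have htp : 0 < t := hδ.trans_le h
    have h1 : t ^ (γ - 1) ≤ δ ^ (γ - 1) :=
      Real.rpow_le_rpow_of_nonpos hδ h (by linarith)
    have h2 : t ^ γ = t ^ (γ - 1) * t := by
      rw [Real.rpow_sub_one htp.ne']; field_simp
    have h3 : 0 ≤ δ ^ γ := by positivity
    rw [h2]
    nlinarith [mul_le_mul_of_nonneg_right h1 ht]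

/-- Interpolation from Lipschitz to Hölder observables: if `μ, ν` are Borel
probability measures on a compact metric space `X` and `δ > 0` is such that
`|∫ φ dμ − ∫ φ dν| ≤ δ·L` for every `L ≥ 0` and every `L`-Lipschitz `φ : X → ℝ`,
then for every `γ ∈ (0,1]`, `H ≥ 0` and every `γ`-Hölder `φ` with constant `H`
one has `|∫ φ dμ − ∫ φ dν| ≤ 3·H·δ^γ`. -/
theorem stmt_14 {X : Type*} [MetricSpace X] [CompactSpace X]
    [MeasurableSpace X] [BorelSpace X]
    (μ ν : MeasureTheory.Measure X)
    [MeasureTheory.IsProbabilityMeasure μ] [MeasureTheory.IsProbabilityMeasure ν]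
    (δ : ℝ) (hδ : 0 < δ)
    (hLip : ∀ L : ℝ, 0 ≤ L → ∀ φ : X → ℝ,
      (∀ x y : X, |φ x - φ y| ≤ L * dist x y) →
      |(∫ x, φ x ∂μ) - ∫ x, φ x ∂ν| ≤ δ * L) :
    ∀ γ : ℝ, 0 < γ → γ ≤ 1 → ∀ H : ℝ, 0 ≤ H → ∀ φ : X → ℝ,
      (∀ x y : X, |φ x - φ y| ≤ H * dist x y ^ γ) →
      |(∫ x, φ x ∂μ) - ∫ x, φ x ∂ν| ≤ 3 * H * δ ^ γ := by
  intro γ hγ hγ1 H hH φ hφ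
  have hL : 0 ≤ H * δ ^ (γ - 1) := by positivity
  have hδL : δ * (H * δ ^ (γ - 1)) = H * δ ^ γ := by
    rw [Real.rpow_sub_one hδ.ne']; field_simp
  have hC : 0 ≤ H * δ ^ γ := by positivity
  have key : ∀ x y : X, φ x - H * δ ^ γ ≤ φ y + H * δ ^ (γ - 1) * dist x y := by
    intro x y
    have h1 := le_of_abs_le (hφ x y)
    have h2 := mul_le_mul_of_nonneg_left (aux_ineq δ hδ γ hγ hγ1 (dist x y) dist_nonneg) hH
    linarith
  set L := H * δ ^ (γ - 1) with hLdef
  let ψ : X → ℝ := fun x => ⨅ y, (φ y + L * dist x y)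
  have bdd : ∀ x, BddBelow (Set.range fun y => φ y + L * dist x y) := by
    intro x
    refine ⟨φ x - H * δ ^ γ, ?_⟩
    rintro _ ⟨y, rfl⟩
    exact key x y
  have hle : ∀ x, ψ x ≤ φ x := by
    intro x
    have := ciInf_le (bdd x) x
    simpa using this
  have hge : ∀ x, φ x - H * δ ^ γ ≤ ψ x := by
    intro x
    haveI : Nonempty X := ⟨x⟩
    exact le_ciInf (key x)
  have hone : ∀ x y, ψ x - ψ y ≤ L * dist x y := by
    intro x y
    haveI : Nonempty X := ⟨x⟩
    have : ψ x - L * dist x y ≤ ψ y := by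
      refine le_ciInf fun z => ?_
      have h1 : ψ x ≤ φ z + L * dist x z := ciInf_le (bdd x) z
      have h2 := mul_le_mul_of_nonneg_left (dist_triangle x y z) hL
      linarith
    linarith
  have hψ : ∀ x y, |ψ x - ψ y| ≤ L * dist x y := by
    intro x y
    refine abs_sub_le_iff.2 ⟨hone x y, ?_⟩
    rw [dist_comm]
    exact hone y x
  have cφ : Continuous φ := aux_cont γ hγ H φ hφ
  have cψ : Continuous ψ := aux_cont 1 one_pos L ψ (by simpa using hψ)
  have main := hLip L hL ψ hψ
  rw [hδL] at main
  have bd : ∀ m : MeasureTheory.Measure X, MeasureTheory.IsProbabilityMeasure m →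
      (∫ x, ψ x ∂m) ≤ ∫ x, φ x ∂m ∧ (∫ x, φ x ∂m) - H * δ ^ γ ≤ ∫ x, ψ x ∂m := by
    intro m hm
    have iφ : MeasureTheory.Integrable φ m :=
      cφ.integrable_of_hasCompactSupport (HasCompactSupport.of_compactSpace φ)
    have iψ : MeasureTheory.Integrable ψ m :=
      cψ.integrable_of_hasCompactSupport (HasCompactSupport.of_compactSpace ψ)
    refine ⟨MeasureTheory.integral_mono iψ iφ hle, ?_⟩
    have h := MeasureTheory.integral_mono (iφ.sub (MeasureTheory.integrable_const (H * δ ^ γ))) iψ hge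
    have h' := MeasureTheory.integral_sub iφ (MeasureTheory.integrable_const (μ := m) (H * δ ^ γ))
    simp at h h'
    linarith
  obtain ⟨a1, a2⟩ := bd μ inferInstance
  obtain ⟨b1, b2⟩ := bd ν inferInstance
  rw [abs_le] at main ⊢
  constructor <;> linarith [main.1, main.2]
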